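/- arXiv:2411.09061 — 5 statements merged into one kernel-verified Lean document; each statement's English description precedes it below -/
import Mathlib

section
/- The discrete group ℤ is asymptotically spherical: for any two maximal length functions ℓ₁ and ℓ₂ on ℤ, there exists λ > 0 such that for every ε > 0 there is M with |ℓ₁(n)/ℓ₂(n) − λ| < ε for all integers n with |n| ≥ M. -/
/-- A length function on an additive group `G`. -/
def IsAddLengthFunction {G : Type*} [AddGroup G] (ℓ : G → ℝ) : Prop :=
  (∀ x : G, 0 ≤ ℓ x) ∧ (∀ x : G, ℓ x = 0 ↔ x = 0) ∧ (∀ x : G, ℓ (-x) = ℓ x) ∧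
    ∀ x y : G, ℓ (x + y) ≤ ℓ x + ℓ y

/-- On a discrete group every length function is compatible, so a length function is
maximal iff it dominates every length function up to affine bounds. -/
def IsMaximalAddLengthDiscrete {G : Type*} [AddGroup G] (ℓ : G → ℝ) : Prop :=
  IsAddLengthFunction ℓ ∧ ∀ ℓ' : G → ℝ, IsAddLengthFunction ℓ' →
    ∃ K C : ℝ, ∀ x : G, ℓ' x ≤ K * ℓ x + C

/-!
Fekete's lemma makes `ℓ (n • g) / n` converge to the stable length of `g`, and `ℓ (-x) = ℓ x`
carries this over to integer multiples. A maximal length function on `ℤ` dominates the absolute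
value up to an affine bound; dividing by `n` kills the additive constant, so the stable length of
`1` is positive, and `ℓ₁ n / ℓ₂ n` tends to the quotient of the two stable lengths of `1`.
-/

open Filter Bornology
open scoped Topology

section StableLength

variable {G : Type*} [AddGroup G] {ℓ ℓ' ℓ₁ ℓ₂ : G → ℝ}

/-- The stable length (or translation length) of `g`, used to compare length functions along the
multiples of `g`. As a `limUnder` it is meaningful only when the limit exists. -/
noncomputable def stableLength (ℓ : G → ℝ) (g : G) : ℝ :=
  limUnder atTop fun n : ℕ => ℓ (n • g) / n

namespace IsAddLengthFunction

theorem nonneg (h : IsAddLengthFunction ℓ) (x : G) : 0 ≤ ℓ x := h.1 x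

theorem map_neg (h : IsAddLengthFunction ℓ) (x : G) : ℓ (-x) = ℓ x := h.2.2.1 x

theorem map_add_le (h : IsAddLengthFunction ℓ) (x y : G) : ℓ (x + y) ≤ ℓ x + ℓ y := h.2.2.2 x y

theorem subadditive_nsmul (h : IsAddLengthFunction ℓ) (g : G) :
    Subadditive fun n : ℕ => ℓ (n • g) := fun m n => by
  simpa only [add_nsmul] using h.map_add_le (m • g) (n • g)

theorem nsmul_div_nonneg (h : IsAddLengthFunction ℓ) (g : G) (n : ℕ) : 0 ≤ ℓ (n • g) / n :=
  div_nonneg (h.nonneg _) n.cast_nonneg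

theorem tendsto_nsmul_div (h : IsAddLengthFunction ℓ) (g : G) :
    Tendsto (fun n : ℕ => ℓ (n • g) / n) atTop (𝓝 (stableLength ℓ g)) := by
  have bddBelow : BddBelow (Set.range fun n : ℕ => ℓ (n • g) / n) :=
    ⟨0, Set.forall_mem_range.2 (h.nsmul_div_nonneg g)⟩
  exact tendsto_nhds_limUnder ⟨_, (h.subadditive_nsmul g).tendsto_lim bddBelow⟩

theorem stableLength_nonneg (h : IsAddLengthFunction ℓ) (g : G) : 0 ≤ stableLength ℓ g :=
  ge_of_tendsto' (h.tendsto_nsmul_div g) (h.nsmul_div_nonneg g)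

theorem map_natAbs_nsmul (h : IsAddLengthFunction ℓ) (g : G) (n : ℤ) :
    ℓ (n.natAbs • g) = ℓ (n • g) := by
  rcases n.natAbs_eq with hn | hn
  · rw [← natCast_zsmul, ← hn]
  · rw [← h.map_neg, ← natCast_zsmul, ← neg_zsmul, ← hn]

theorem tendsto_zsmul_div_norm (h : IsAddLengthFunction ℓ) (g : G) :
    Tendsto (fun n : ℤ => ℓ (n • g) / ‖n‖) (cobounded ℤ) (𝓝 (stableLength ℓ g)) := by
  have natAbs_eq_norm (n : ℤ) : (n.natAbs : ℝ) = ‖n‖ := by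
    rw [Nat.cast_natAbs, Int.cast_abs, Int.norm_eq_abs]
  have tendsto_natAbs : Tendsto Int.natAbs (cobounded ℤ) atTop := by
    rw [← tendsto_natCast_atTop_iff (R := ℝ)]
    exact tendsto_norm_cobounded_atTop.congr fun n => (natAbs_eq_norm n).symm
  refine ((h.tendsto_nsmul_div g).comp tendsto_natAbs).congr fun n => ?_
  rw [Function.comp_apply, h.map_natAbs_nsmul, natAbs_eq_norm]

theorem tendsto_zsmul_div_zsmul (h₁ : IsAddLengthFunction ℓ₁) (h₂ : IsAddLengthFunction ℓ₂)
    {g : G} (hg : stableLength ℓ₂ g ≠ 0) :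
    Tendsto (fun n : ℤ => ℓ₁ (n • g) / ℓ₂ (n • g)) (cobounded ℤ)
      (𝓝 (stableLength ℓ₁ g / stableLength ℓ₂ g)) := by
  refine ((h₁.tendsto_zsmul_div_norm g).div (h₂.tendsto_zsmul_div_norm g) hg).congr' ?_
  filter_upwards [eventually_ne_cobounded (0 : ℤ)] with n hn
  exact div_div_div_cancel_right₀ (norm_ne_zero_iff.2 hn) _ _

theorem stableLength_le_mul (h' : IsAddLengthFunction ℓ') (h : IsAddLengthFunction ℓ) {K C : ℝ}
    (hle : ∀ x, ℓ' x ≤ K * ℓ x + C) (g : G) : stableLength ℓ' g ≤ K * stableLength ℓ g := by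
  have tendsto_bound :
      Tendsto (fun n : ℕ => K * (ℓ (n • g) / n) + C / n) atTop (𝓝 (K * stableLength ℓ g)) := by
    simpa only [add_zero] using
      ((h.tendsto_nsmul_div g).const_mul K).add (tendsto_const_div_atTop_nhds_zero_nat C)
  refine le_of_tendsto_of_tendsto' (h'.tendsto_nsmul_div g) tendsto_bound fun n => ?_
  calc
    ℓ' (n • g) / n ≤ (K * ℓ (n • g) + C) / n := by gcongr; exact hle _
    _ = K * (ℓ (n • g) / n) + C / n := by ring

end IsAddLengthFunction

theorem IsMaximalAddLengthDiscrete.stableLength_pos (h : IsMaximalAddLengthDiscrete ℓ)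
    (h' : IsAddLengthFunction ℓ') {g : G} (hg : 0 < stableLength ℓ' g) :
    0 < stableLength ℓ g := by
  obtain ⟨K, C, hle⟩ := h.2 ℓ' h'
  have pos_mul : 0 < K * stableLength ℓ g := hg.trans_le (h'.stableLength_le_mul h.1 hle g)
  exact (h.1.stableLength_nonneg g).lt_of_ne' (right_ne_zero_of_mul pos_mul.ne')

end StableLength

section Norm

variable {E : Type*} [NormedAddGroup E]

theorem isAddLengthFunction_norm : IsAddLengthFunction (norm : E → ℝ) :=
  ⟨norm_nonneg, fun _ => norm_eq_zero, norm_neg, norm_add_le⟩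

theorem stableLength_norm [NormSMulClass ℤ E] (x : E) : stableLength norm x = ‖x‖ := by
  refine tendsto_nhds_unique (isAddLengthFunction_norm.tendsto_zsmul_div_norm x)
    (tendsto_const_nhds.congr' ?_)
  filter_upwards [eventually_ne_cobounded (0 : ℤ)] with n hn
  rw [norm_smul, mul_div_cancel_left₀ _ (norm_ne_zero_iff.2 hn)]

theorem IsMaximalAddLengthDiscrete.stableLength_pos_of_ne_zero [NormSMulClass ℤ E] {ℓ : E → ℝ}
    (h : IsMaximalAddLengthDiscrete ℓ) {x : E} (hx : x ≠ 0) : 0 < stableLength ℓ x := by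
  refine h.stableLength_pos (isAddLengthFunction_norm (E := E)) ?_
  rwa [stableLength_norm, norm_pos_iff]

end Norm

/-- The discrete group `ℤ` is asymptotically spherical: for any two maximal length
functions `ℓ₁, ℓ₂` on `ℤ` there is `λ > 0` such that `ℓ₁(n)/ℓ₂(n) → λ` as `|n| → ∞`. -/
theorem statement5 (ℓ₁ ℓ₂ : ℤ → ℝ)
    (h₁ : IsMaximalAddLengthDiscrete ℓ₁) (h₂ : IsMaximalAddLengthDiscrete ℓ₂) :
    ∃ lam : ℝ, 0 < lam ∧ ∀ ε : ℝ, 0 < ε → ∃ M : ℝ,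
      ∀ n : ℤ, M ≤ |(n : ℝ)| → |ℓ₁ n / ℓ₂ n - lam| < ε := by
  have pos₁ : 0 < stableLength ℓ₁ 1 := h₁.stableLength_pos_of_ne_zero one_ne_zero
  have pos₂ : 0 < stableLength ℓ₂ 1 := h₂.stableLength_pos_of_ne_zero one_ne_zero
  refine ⟨stableLength ℓ₁ 1 / stableLength ℓ₂ 1, div_pos pos₁ pos₂, fun ε hε => ?_⟩
  have tendsto_ratio : Tendsto (fun n : ℤ => ℓ₁ n / ℓ₂ n) (cobounded ℤ)
      (𝓝 (stableLength ℓ₁ 1 / stableLength ℓ₂ 1)) := by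
    simpa only [smul_eq_mul, mul_one] using h₁.1.tendsto_zsmul_div_zsmul h₂.1 pos₂.ne'
  obtain ⟨M, -, hM⟩ :=
    (hasBasis_cobounded_norm.tendsto_iff Metric.nhds_basis_ball).1 tendsto_ratio ε hε
  exact ⟨M, hM⟩
end

section
/- The additive topological group ℝ (with its usual topology) is asymptotically spherical: for any two maximal length functions ℓ₁ and ℓ₂ on ℝ, there exists λ > 0 such that for every ε > 0 there is M with |ℓ₁(x)/ℓ₂(x) − λ| < ε for all real x with |x| ≥ M. -/
open Filter Topology

/-- A compatible length function on an additive topological group: the balls `B_ℓ(r)`,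
`r > 0`, form a neighbourhood basis at the identity. -/
def IsCompatibleAddLength {G : Type*} [AddGroup G] [TopologicalSpace G] (ℓ : G → ℝ) : Prop :=
  IsAddLengthFunction ℓ ∧ (∀ r : ℝ, 0 < r → {x : G | ℓ x < r} ∈ 𝓝 (0 : G)) ∧
    ∀ U ∈ 𝓝 (0 : G), ∃ r : ℝ, 0 < r ∧ {x : G | ℓ x < r} ⊆ U

/-- A maximal (compatible) length function on an additive topological group. -/
def IsMaximalAddLength {G : Type*} [AddGroup G] [TopologicalSpace G] (ℓ : G → ℝ) : Prop :=
  IsCompatibleAddLength ℓ ∧ ∀ ℓ' : G → ℝ, IsCompatibleAddLength ℓ' →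
    ∃ K C : ℝ, ∀ x : G, ℓ' x ≤ K * ℓ x + C

/-!
An even subadditive function `f` is nonnegative, so by Fekete's lemma `f n / n` converges along the
natural numbers. Being bounded near `0`, `f` is bounded above on `[-1, 1]`, hence `f x` and
`f ⌊x⌋₊` differ by a bounded amount and `f x / |x|` has the same limit as `|x| → ∞`. Comparing a
maximal length function with the compatible length function `|·|` shows that it grows at least
linearly, so its limit is positive; the quotient of the two limits is the required `λ`.
-/

open Asymptotics Bornology

section Subadditive

theorem nonneg_of_even_of_subadditive {G : Type*} [AddGroup G] {f : G → ℝ} (heven : f.Even)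
    (hsub : ∀ x y, f (x + y) ≤ f x + f y) (x : G) : 0 ≤ f x := by
  have h_zero : f 0 ≤ f 0 + f 0 := by simpa only [add_zero] using hsub 0 0
  have h_neg : f 0 ≤ f x + f x := by simpa only [add_neg_cancel, heven x] using hsub x (-x)
  linarith

theorem bddAbove_image_of_subadditive {E : Type*} [SeminormedAddCommGroup E] [NormedSpace ℝ E]
    {f : E → ℝ} (hsub : ∀ x y, f (x + y) ≤ f x + f y)
    (hbdd : (𝓝 0).IsBoundedUnder (· ≤ ·) f) {s : Set E} (hs : IsBounded s) :
    BddAbove (f '' s) := by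
  obtain ⟨B, hB⟩ := hbdd
  obtain ⟨r, hr, hball⟩ := Metric.eventually_nhds_iff.1 (eventually_map.1 hB)
  obtain ⟨R, hR⟩ := hs.exists_norm_le
  obtain ⟨n, hn⟩ := exists_nat_gt (max (R / r) 0)
  have hn_pos : (0 : ℝ) < n := (le_max_right _ _).trans_lt hn
  have hR_lt : R < n * r := (div_lt_iff₀ hr).1 ((le_max_left _ _).trans_lt hn)
  refine ⟨n * B, Set.forall_mem_image.2 fun x hx => ?_⟩
  have h_near : f ((n : ℝ)⁻¹ • x) ≤ B := by
    apply hball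
    rw [dist_zero_right, norm_smul, norm_inv, Real.norm_natCast, inv_mul_lt_iff₀ hn_pos]
    exact (hR x hx).trans_lt hR_lt
  have h_nonempty : (Finset.range n).Nonempty := by
    simpa only [Finset.nonempty_range_iff, Nat.cast_ne_zero] using hn_pos.ne'
  calc f x = f (∑ _i ∈ Finset.range n, (n : ℝ)⁻¹ • x) := by
        rw [Finset.sum_const, Finset.card_range, ← Nat.cast_smul_eq_nsmul ℝ,
          smul_inv_smul₀ hn_pos.ne']
    _ ≤ ∑ _i ∈ Finset.range n, f ((n : ℝ)⁻¹ • x) :=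
        Finset.le_sum_nonempty_of_subadditive f hsub h_nonempty _
    _ = n * f ((n : ℝ)⁻¹ • x) := by rw [Finset.sum_const, Finset.card_range, nsmul_eq_mul]
    _ ≤ n * B := by gcongr

variable {f : ℝ → ℝ}

theorem isBigO_one_sub_natFloor_of_subadditive (hsub : ∀ x y, f (x + y) ≤ f x + f y)
    (hbdd : (𝓝 0).IsBoundedUnder (· ≤ ·) f) :
    (fun x => f x - f ⌊x⌋₊) =O[atTop] (1 : ℝ → ℝ) := by
  obtain ⟨B, hB⟩ := bddAbove_image_of_subadditive hsub hbdd (Metric.isBounded_Icc (-1) 1)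
  have hB_le : ∀ t : ℝ, |t| ≤ 1 → f t ≤ B := fun t ht => hB ⟨t, abs_le.1 ht, rfl⟩
  refine .of_bound B ?_
  filter_upwards [eventually_ge_atTop 0] with x hx
  have h_fract : |x - ⌊x⌋₊| ≤ 1 := by
    rw [abs_le]
    constructor <;> linarith [Nat.floor_le hx, Nat.lt_floor_add_one x]
  have h_upper : f x ≤ f (x - ⌊x⌋₊) + f ⌊x⌋₊ := by simpa using hsub (x - ⌊x⌋₊) ⌊x⌋₊
  have h_lower : f ⌊x⌋₊ ≤ f (⌊x⌋₊ - x) + f x := by simpa using hsub (⌊x⌋₊ - x) x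
  rw [Pi.one_apply, norm_one, mul_one, Real.norm_eq_abs, abs_le]
  constructor
  · linarith [hB_le (⌊x⌋₊ - x) (by rwa [abs_sub_comm])]
  · linarith [hB_le _ h_fract]

theorem tendsto_div_atTop_of_tendsto_natCast {L : ℝ}
    (hlim : Tendsto (fun n : ℕ => f n / n) atTop (𝓝 L))
    (hfloor : (fun x => f x - f ⌊x⌋₊) =o[atTop] (id : ℝ → ℝ)) :
    Tendsto (fun x => f x / x) atTop (𝓝 L) := by
  have h_main : Tendsto (fun x : ℝ => f ⌊x⌋₊ / ⌊x⌋₊ * (⌊x⌋₊ / x)) atTop (𝓝 (L * 1)) :=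
    (hlim.comp tendsto_nat_floor_atTop).mul tendsto_nat_floor_div_atTop
  have h_sum := h_main.add hfloor.tendsto_div_nhds_zero
  rw [mul_one, add_zero] at h_sum
  refine h_sum.congr' ?_
  filter_upwards [eventually_ge_atTop 1] with x hx
  have h_floor : (⌊x⌋₊ : ℝ) ≠ 0 := Nat.cast_ne_zero.2 (Nat.floor_pos.2 hx).ne'
  rw [div_mul_div_cancel₀ h_floor, id, ← add_div, add_sub_cancel]

theorem exists_tendsto_div_atTop_of_subadditive (hsub : ∀ x y, f (x + y) ≤ f x + f y)
    (hbdd : (𝓝 0).IsBoundedUnder (· ≤ ·) f)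
    (hbelow : BddBelow (Set.range fun n : ℕ => f n / n)) :
    ∃ L, Tendsto (fun x => f x / x) atTop (𝓝 L) := by
  have h_seq : Subadditive fun n : ℕ => f n := fun m n => by
    simpa only [Nat.cast_add] using hsub m n
  have h_floor : (fun x => f x - f ⌊x⌋₊) =o[atTop] (id : ℝ → ℝ) :=
    (isBigO_one_sub_natFloor_of_subadditive hsub hbdd).trans_isLittleO
      (isLittleO_const_id_atTop 1)
  exact ⟨h_seq.lim, tendsto_div_atTop_of_tendsto_natCast (h_seq.tendsto_lim hbelow) h_floor⟩

end Subadditive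

section LinearGrowth

theorem ne_zero_of_tendsto_div_of_isBigO {α 𝕜 : Type*} [NormedField 𝕜] {l : Filter α} [l.NeBot]
    {u v : α → 𝕜} {c : 𝕜} (hv : ∀ᶠ x in l, v x ≠ 0)
    (hlim : Tendsto (fun x => u x / v x) l (𝓝 c)) (hvu : v =O[l] u) : c ≠ 0 := by
  rintro rfl
  have h_little : u =o[l] v := (isLittleO_iff_tendsto' (hv.mono fun _ hx h => absurd h hx)).2 hlim
  exact isLittleO_irrefl hv.frequently (hvu.trans_isLittleO h_little)

variable {f g : ℝ → ℝ}

theorem exists_pos_tendsto_div_abs_cobounded (heven : f.Even)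
    (hsub : ∀ x y, f (x + y) ≤ f x + f y) (hbdd : (𝓝 0).IsBoundedUnder (· ≤ ·) f)
    (hgrowth : id =O[cobounded ℝ] f) :
    ∃ L, 0 < L ∧ Tendsto (fun x => f x / |x|) (cobounded ℝ) (𝓝 L) := by
  have h_nonneg := nonneg_of_even_of_subadditive heven hsub
  have h_below : BddBelow (Set.range fun n : ℕ => f n / n) :=
    ⟨0, Set.forall_mem_range.2 fun n => div_nonneg (h_nonneg n) n.cast_nonneg⟩
  obtain ⟨L, hL⟩ := exists_tendsto_div_atTop_of_subadditive hsub hbdd h_below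
  have hL_nonneg : 0 ≤ L := ge_of_tendsto hL <|
    (eventually_ge_atTop 0).mono fun x hx => div_nonneg (h_nonneg x) hx
  have hL_ne : L ≠ 0 :=
    ne_zero_of_tendsto_div_of_isBigO (eventually_ne_atTop 0) hL
      (hgrowth.mono IsOrderBornology.atTop_le_cobounded)
  have h_abs (x : ℝ) : f |x| = f x := by
    rcases abs_choice x with h | h <;> rw [h]
    exact heven x
  refine ⟨L, hL_nonneg.lt_of_ne' hL_ne, ?_⟩
  simpa only [Function.comp_def, Real.norm_eq_abs, h_abs] using
    hL.comp (tendsto_norm_cobounded_atTop (E := ℝ))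

theorem statement6_general (hf_even : f.Even) (hf_sub : ∀ x y, f (x + y) ≤ f x + f y)
    (hf_bdd : (𝓝 0).IsBoundedUnder (· ≤ ·) f) (hf_growth : id =O[cobounded ℝ] f)
    (hg_even : g.Even) (hg_sub : ∀ x y, g (x + y) ≤ g x + g y)
    (hg_bdd : (𝓝 0).IsBoundedUnder (· ≤ ·) g) (hg_growth : id =O[cobounded ℝ] g) :
    ∃ lam, 0 < lam ∧ Tendsto (fun x => f x / g x) (cobounded ℝ) (𝓝 lam) := by
  obtain ⟨L, hL_pos, hL⟩ := exists_pos_tendsto_div_abs_cobounded hf_even hf_sub hf_bdd hf_growth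
  obtain ⟨M, hM_pos, hM⟩ := exists_pos_tendsto_div_abs_cobounded hg_even hg_sub hg_bdd hg_growth
  refine ⟨L / M, div_pos hL_pos hM_pos, (hL.div hM hM_pos.ne').congr' ?_⟩
  filter_upwards [eventually_ne_cobounded 0] with x hx
  exact div_div_div_cancel_right₀ (abs_ne_zero.2 hx) _ _

end LinearGrowth

section LengthFunction

theorem isCompatibleAddLength_norm (E : Type*) [NormedAddGroup E] :
    IsCompatibleAddLength fun x : E => ‖x‖ := by
  have h_ball (r : ℝ) : {x : E | ‖x‖ < r} = Metric.ball 0 r := by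
    ext x
    simp only [Set.mem_ofPred_eq, mem_ball_zero_iff]
  refine ⟨⟨norm_nonneg, fun _ => norm_eq_zero, norm_neg, norm_add_le⟩, ?_, ?_⟩ <;>
    simp only [h_ball]
  · exact fun r hr => Metric.ball_mem_nhds 0 hr
  · exact fun U hU => Metric.mem_nhds_iff.1 hU

theorem IsCompatibleAddLength.isBoundedUnder_nhds_zero {G : Type*} [AddGroup G]
    [TopologicalSpace G] {ℓ : G → ℝ} (h : IsCompatibleAddLength ℓ) :
    (𝓝 0).IsBoundedUnder (· ≤ ·) ℓ :=
  isBoundedUnder_of_eventually_le <|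
    eventually_of_mem (h.2.1 1 one_pos) fun _ hx => le_of_lt hx

theorem IsMaximalAddLength.id_isBigO_cobounded {E : Type*} [NormedAddGroup E] {ℓ : E → ℝ}
    (h : IsMaximalAddLength ℓ) : id =O[cobounded E] ℓ := by
  obtain ⟨K, C, hKC⟩ := h.2 _ (isCompatibleAddLength_norm E)
  refine .of_bound (2 * K) ?_
  filter_upwards [eventually_cobounded_le_norm (2 * C)] with x hx
  rw [Real.norm_of_nonneg (h.1.1.1 x), id]
  linarith [hKC x]

end LengthFunction

/-- The additive topological group `ℝ` (with its usual topology) is asymptotically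
spherical: for any two maximal length functions `ℓ₁, ℓ₂` on `ℝ` there is `λ > 0` such
that `ℓ₁(x)/ℓ₂(x) → λ` as `|x| → ∞`. -/
theorem statement6 (ℓ₁ ℓ₂ : ℝ → ℝ)
    (h₁ : IsMaximalAddLength ℓ₁) (h₂ : IsMaximalAddLength ℓ₂) :
    ∃ lam : ℝ, 0 < lam ∧ ∀ ε : ℝ, 0 < ε → ∃ M : ℝ,
      ∀ x : ℝ, M ≤ |x| → |ℓ₁ x / ℓ₂ x - lam| < ε := by
  obtain ⟨⟨-, -, heven₁, hsub₁⟩, -⟩ := h₁.1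
  obtain ⟨⟨-, -, heven₂, hsub₂⟩, -⟩ := h₂.1
  obtain ⟨lam, hlam_pos, hlam⟩ :=
    statement6_general heven₁ hsub₁ h₁.1.isBoundedUnder_nhds_zero h₁.id_isBigO_cobounded
      heven₂ hsub₂ h₂.1.isBoundedUnder_nhds_zero h₂.id_isBigO_cobounded
  refine ⟨lam, hlam_pos, ?_⟩
  simpa [Real.dist_eq] using
    (hasBasis_cobounded_norm.tendsto_iff Metric.nhds_basis_ball).1 hlam
end

section
/- The infinite dihedral group D∞ = C₂ ⋉ ℤ (the semidirect product in which the nontrivial element of the cyclic group C₂ of order 2 acts on ℤ by n ↦ −n), regarded as a discrete group, is asymptotically spherical: for any two maximal length functions ℓ₁ and ℓ₂ on D∞, there exists λ > 0 such that for every ε > 0 the set { g ∈ D∞ : |ℓ₁(g)/ℓ₂(g) − λ| ≥ ε } is finite. -/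
open Multiplicative

/-- A length function on a group `G`. -/
def IsLengthFunction {G : Type*} [Group G] (ℓ : G → ℝ) : Prop :=
  (∀ x : G, 0 ≤ ℓ x) ∧ (∀ x : G, ℓ x = 0 ↔ x = 1) ∧ (∀ x : G, ℓ x⁻¹ = ℓ x) ∧
    ∀ x y : G, ℓ (x * y) ≤ ℓ x + ℓ y

/-- On a discrete group every length function is compatible, so a length function is
maximal iff it dominates every length function up to affine bounds. -/
def IsMaximalLengthDiscrete {G : Type*} [Group G] (ℓ : G → ℝ) : Prop :=
  IsLengthFunction ℓ ∧ ∀ ℓ' : G → ℝ, IsLengthFunction ℓ' →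
    ∃ K C : ℝ, ∀ x : G, ℓ' x ≤ K * ℓ x + C

/-- The automorphism `n ↦ -n` of `ℤ` (written multiplicatively). -/
def negAut : MulAut (Multiplicative ℤ) := MulEquiv.inv (Multiplicative ℤ)

theorem negAut_sq : negAut ^ 2 = 1 := by
  ext x
  show (negAut ^ 2) x = x
  rw [sq]
  simp [MulAut.mul_apply, negAut]

/-- The homomorphism `C₂ → Aut(ℤ)` sending the generator to `n ↦ -n`. -/
def negHom : Multiplicative (ZMod 2) →* MulAut (Multiplicative ℤ) :=
  MonoidHom.mk' (fun i => negAut ^ (toAdd i).val)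
    (fun a b => by
      show negAut ^ (toAdd (a * b)).val = _
      rw [toAdd_mul, ZMod.val_add, ← pow_eq_pow_mod _ negAut_sq, pow_add])

/-- The infinite dihedral group `D∞ = C₂ ⋉ ℤ`, where the nontrivial element of `C₂`
acts on `ℤ` by `n ↦ -n`. -/
abbrev DInf := SemidirectProduct (Multiplicative ℤ) (Multiplicative (ZMod 2)) negHom

/-!
Let `H` be an infinite cyclic subgroup of finite index in `G`. A length function on `H` induces one
on `G` that dominates it up to a constant, so a maximal length function on `G` restricts to a
maximal one on `H ≃ ℤ`. By Fekete's lemma a maximal length function on `ℤ` is asymptotic to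
`L * |n|`, and comparison with `|n|` forces `L > 0`; hence the ratio of two of them converges on
`H` to a positive number. Left translation changes a length function by a bounded amount and maximal
length functions on `H` are proper, so the ratio has the same limit along each of the finitely many
cosets of `H`.
-/

open Filter Function Topology

section LengthFunction

variable {G H : Type*} [Group G] [Group H] {ℓ ℓ' : G → ℝ}

namespace IsLengthFunction

theorem nonneg (h : IsLengthFunction ℓ) (x : G) : 0 ≤ ℓ x := h.1 x

theorem eq_zero_iff (h : IsLengthFunction ℓ) {x : G} : ℓ x = 0 ↔ x = 1 := h.2.1 x

theorem map_one (h : IsLengthFunction ℓ) : ℓ 1 = 0 := h.eq_zero_iff.2 rfl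

theorem map_inv (h : IsLengthFunction ℓ) (x : G) : ℓ x⁻¹ = ℓ x := h.2.2.1 x

theorem map_mul_le (h : IsLengthFunction ℓ) (x y : G) : ℓ (x * y) ≤ ℓ x + ℓ y := h.2.2.2 x y

theorem comp_injective (h : IsLengthFunction ℓ) (f : H →* G) (hf : Injective f) :
    IsLengthFunction (ℓ ∘ f) :=
  ⟨fun x => h.nonneg (f x), fun x => h.eq_zero_iff.trans (map_eq_one_iff f hf),
    fun x => by simp only [comp_apply, _root_.map_inv, h.map_inv],
    fun x y => by simpa only [comp_apply, map_mul] using h.map_mul_le (f x) (f y)⟩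

theorem abs_mul_left_sub_le (h : IsLengthFunction ℓ) (g x : G) : |ℓ (g * x) - ℓ x| ≤ ℓ g := by
  have hx : ℓ x ≤ ℓ g + ℓ (g * x) := by
    simpa only [inv_mul_cancel_left, h.map_inv] using h.map_mul_le g⁻¹ (g * x)
  rw [abs_le]
  constructor <;> linarith [h.map_mul_le g x]

open Asymptotics in
theorem isEquivalent_mul_left (h : IsLengthFunction ℓ) (g : G) {α : Type*} {l : Filter α}
    {f : α → G} (hf : Tendsto (fun a => ℓ (f a)) l atTop) :
    (fun a => ℓ (g * f a)) ~[l] fun a => ℓ (f a) := by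
  have hbounded : (fun a => ℓ (g * f a) - ℓ (f a)) =O[l] fun _ => (1 : ℝ) :=
    IsBigO.of_bound (ℓ g) (Eventually.of_forall fun a => by
      simpa using h.abs_mul_left_sub_le g (f a))
  exact hbounded.trans_isLittleO
    ((isLittleO_const_left_of_ne one_ne_zero).2 (tendsto_norm_atTop_atTop.comp hf))

end IsLengthFunction

theorem isLengthFunction_indicator_compl_one :
    IsLengthFunction (({1}ᶜ : Set G).indicator (1 : G → ℝ)) := by
  classical
  refine ⟨fun x => Set.indicator_nonneg (fun _ _ => zero_le_one) x, fun x => by simp,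
    fun x => by simp [Set.indicator_apply], fun x y => ?_⟩
  by_cases hx : x = 1 <;> by_cases hy : y = 1 <;> by_cases hxy : x * y = 1 <;>
    simp_all

namespace IsMaximalLengthDiscrete

theorem exists_pos_le_mul_add (h : IsMaximalLengthDiscrete ℓ) (h' : IsLengthFunction ℓ') :
    ∃ K : ℝ, 0 < K ∧ ∃ C : ℝ, ∀ x, ℓ' x ≤ K * ℓ x + C := by
  obtain ⟨K, C, hKC⟩ := h.2 ℓ' h'
  refine ⟨max K 1, by positivity, C, fun x => (hKC x).trans ?_⟩
  gcongr
  · exact h.1.nonneg x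
  · exact le_max_left K 1

theorem tendsto_atTop (h : IsMaximalLengthDiscrete ℓ) (h' : IsLengthFunction ℓ') {l : Filter G}
    (hl : Tendsto ℓ' l atTop) : Tendsto ℓ l atTop := by
  obtain ⟨K, hK, C, hKC⟩ := h.exists_pos_le_mul_add h'
  have haffine : Tendsto (fun x => K * ℓ x + C) l atTop := tendsto_atTop_mono hKC hl
  have hlinear : Tendsto (fun x => K * ℓ x) l atTop := by
    simpa only [add_neg_cancel_right] using tendsto_atTop_add_const_right l (-C) haffine
  exact (tendsto_const_mul_atTop_of_pos hK).1 hlinear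

theorem comp_mulEquiv (h : IsMaximalLengthDiscrete ℓ) (e : H ≃* G) :
    IsMaximalLengthDiscrete (ℓ ∘ e) := by
  refine ⟨h.1.comp_injective e.toMonoidHom e.injective, fun ℓ'' h'' => ?_⟩
  obtain ⟨K, C, hKC⟩ := h.2 _ (h''.comp_injective e.symm.toMonoidHom e.symm.injective)
  exact ⟨K, C, fun x => by simpa using hKC (e x)⟩

end IsMaximalLengthDiscrete

end LengthFunction

section InducedLength

variable {G : Type*} [Group G] {H : Subgroup G}

/-- The cocycle `G × G ⧸ H → H` attached to the section `Quotient.out` of `G → G ⧸ H`: it measures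
the failure of this section to be `G`-equivariant. -/
noncomputable def cosetCocycle (g : G) (q : G ⧸ H) : H :=
  ⟨(g • q).out⁻¹ * (g * q.out), QuotientGroup.eq.1 <| by
    rw [QuotientGroup.out_eq', ← smul_eq_mul, ← MulAction.Quotient.smul_mk,
      QuotientGroup.out_eq']⟩

theorem coe_cosetCocycle (g : G) (q : G ⧸ H) :
    (cosetCocycle g q : G) = (g • q).out⁻¹ * (g * q.out) := rfl

theorem cosetCocycle_one (q : G ⧸ H) : cosetCocycle 1 q = 1 := by
  ext
  simp [coe_cosetCocycle]

theorem cosetCocycle_mul (g g' : G) (q : G ⧸ H) :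
    cosetCocycle (g * g') q = cosetCocycle g (g' • q) * cosetCocycle g' q := by
  ext
  simp only [coe_cosetCocycle, Subgroup.coe_mul, mul_smul]
  group

theorem cosetCocycle_inv (g : G) (q : G ⧸ H) :
    cosetCocycle g⁻¹ q = (cosetCocycle g (g⁻¹ • q))⁻¹ := by
  rw [eq_inv_iff_mul_eq_one, ← cosetCocycle_one (g⁻¹ • q), ← inv_mul_cancel g, cosetCocycle_mul,
    smul_inv_smul]

/-- The length function on `G` induced by a length function `ℓ` on a subgroup of finite index. The
indicator makes it vanish only at the identity, since the supremum also vanishes at every `g` for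
which the section `Quotient.out` commutes with translation by `g`. -/
noncomputable def inducedLength (ℓ : H → ℝ) (g : G) : ℝ :=
  ({1}ᶜ : Set G).indicator 1 g + ⨆ q : G ⧸ H, ℓ (cosetCocycle g q)

variable {ℓ : H → ℝ}

theorem IsLengthFunction.iSup_cosetCocycle_nonneg (h : IsLengthFunction ℓ) (g : G) :
    0 ≤ ⨆ q : G ⧸ H, ℓ (cosetCocycle g q) :=
  Real.iSup_nonneg fun _ => h.nonneg _

theorem IsLengthFunction.iSup_cosetCocycle_inv (h : IsLengthFunction ℓ) (g : G) :
    ⨆ q : G ⧸ H, ℓ (cosetCocycle g⁻¹ q) = ⨆ q : G ⧸ H, ℓ (cosetCocycle g q) :=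
  (MulAction.toPerm g⁻¹).iSup_congr fun q => by
    rw [cosetCocycle_inv, h.map_inv, MulAction.toPerm_apply]

variable [H.FiniteIndex]

theorem le_iSup_cosetCocycle (ℓ : H → ℝ) (g : G) (q : G ⧸ H) :
    ℓ (cosetCocycle g q) ≤ ⨆ q : G ⧸ H, ℓ (cosetCocycle g q) :=
  le_ciSup (Set.finite_range fun q : G ⧸ H => ℓ (cosetCocycle g q)).bddAbove q

theorem IsLengthFunction.iSup_cosetCocycle_mul_le (h : IsLengthFunction ℓ) (g g' : G) :
    ⨆ q : G ⧸ H, ℓ (cosetCocycle (g * g') q) ≤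
      (⨆ q : G ⧸ H, ℓ (cosetCocycle g q)) + ⨆ q : G ⧸ H, ℓ (cosetCocycle g' q) :=
  ciSup_le fun q => calc
    ℓ (cosetCocycle (g * g') q) ≤ ℓ (cosetCocycle g (g' • q)) + ℓ (cosetCocycle g' q) := by
      rw [cosetCocycle_mul]
      exact h.map_mul_le _ _
    _ ≤ _ := add_le_add (le_iSup_cosetCocycle ℓ g _) (le_iSup_cosetCocycle ℓ g' q)

theorem IsLengthFunction.isLengthFunction_inducedLength (h : IsLengthFunction ℓ) :
    IsLengthFunction (inducedLength ℓ) := by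
  have hind : IsLengthFunction (({1}ᶜ : Set G).indicator 1) := isLengthFunction_indicator_compl_one
  refine ⟨fun g => ?_, fun g => ⟨fun hg => ?_, ?_⟩, fun g => ?_, fun g g' => ?_⟩
  · exact add_nonneg (hind.nonneg g) (h.iSup_cosetCocycle_nonneg g)
  · exact hind.eq_zero_iff.1 ((add_eq_zero_iff_of_nonneg (hind.nonneg g)
      (h.iSup_cosetCocycle_nonneg g)).1 hg).1
  · rintro rfl
    simp [inducedLength, cosetCocycle_one, h.map_one]
  · simp only [inducedLength, h.iSup_cosetCocycle_inv, hind.map_inv]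
  · simp only [inducedLength]
    linarith [hind.map_mul_le g g', h.iSup_cosetCocycle_mul_le g g']

theorem IsLengthFunction.exists_le_inducedLength_add (h : IsLengthFunction ℓ) :
    ∃ C : ℝ, ∀ x : H, ℓ x ≤ inducedLength ℓ (x : G) + C := by
  let q : G ⧸ H := (1 : G)
  obtain ⟨r, hr⟩ : ∃ r : H, q.out = r := by
    simpa only [one_mul] using QuotientGroup.mk_out_eq_mul H 1
  have hcocycle (x : H) : cosetCocycle (x : G) q = r⁻¹ * (x * r) := by
    have hfix : (x : G) • q = q :=
      (MulAction.Quotient.smul_mk H (x : G) 1).trans <| QuotientGroup.eq.2 <| by simp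
    ext
    simp [coe_cosetCocycle, hfix, hr]
  refine ⟨2 * ℓ r, fun x => ?_⟩
  have hconj : ℓ x ≤ ℓ r + ℓ (r⁻¹ * (x * r)) + ℓ r := calc
    ℓ x = ℓ (r * (r⁻¹ * (x * r)) * r⁻¹) := by group
    _ ≤ ℓ (r * (r⁻¹ * (x * r))) + ℓ r⁻¹ := h.map_mul_le _ _
    _ ≤ ℓ r + ℓ (r⁻¹ * (x * r)) + ℓ r := by
      rw [h.map_inv]
      gcongr
      exact h.map_mul_le _ _
  have hsup : ℓ (r⁻¹ * (x * r)) ≤ inducedLength ℓ (x : G) := by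
    rw [← hcocycle]
    exact (le_iSup_cosetCocycle ℓ _ q).trans
      (le_add_of_nonneg_left (isLengthFunction_indicator_compl_one.nonneg _))
  linarith

theorem IsMaximalLengthDiscrete.comp_subtype {ℓ : G → ℝ} (h : IsMaximalLengthDiscrete ℓ)
    (H : Subgroup G) [H.FiniteIndex] : IsMaximalLengthDiscrete (ℓ ∘ H.subtype) := by
  refine ⟨h.1.comp_injective H.subtype H.subtype_injective, fun ℓ' h' => ?_⟩
  obtain ⟨C, hC⟩ := h'.exists_le_inducedLength_add
  obtain ⟨K, C', hKC'⟩ := h.2 _ h'.isLengthFunction_inducedLength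
  refine ⟨K, C' + C, fun x => ?_⟩
  have := hKC' x
  simp only [comp_apply, Subgroup.subtype_apply]
  linarith [hC x]

end InducedLength

section FiniteIndex

variable {G : Type*} [Group G] {H : Subgroup G} [H.FiniteIndex]

theorem tendsto_cofinite_of_forall_coset {β : Type*} {f : G → β} {l : Filter β}
    (h : ∀ g : G, Tendsto (fun x : H => f (g * x)) cofinite l) : Tendsto f cofinite l := by
  intro s hs
  have hcoset (q : G ⧸ H) : {x : H | f (q.out * x) ∉ s}.Finite := h q.out hs
  refine (Set.finite_iUnion fun q => (hcoset q).image fun x : H => q.out * (x : G)).subset ?_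
  intro g hg
  let x : H := ⟨(g : G ⧸ H).out⁻¹ * g, QuotientGroup.eq.1 (QuotientGroup.out_eq' _)⟩
  have hx : (g : G ⧸ H).out * (x : G) = g := mul_inv_cancel_left _ g
  exact Set.mem_iUnion.2 ⟨g, x, (congrArg (f · ∉ s) hx).mpr hg, hx⟩

theorem IsLengthFunction.tendsto_div_of_finiteIndex {ℓ₁ ℓ₂ : G → ℝ} (h₁ : IsLengthFunction ℓ₁)
    (h₂ : IsLengthFunction ℓ₂) (hproper₁ : Tendsto (fun x : H => ℓ₁ x) cofinite atTop)
    (hproper₂ : Tendsto (fun x : H => ℓ₂ x) cofinite atTop) {c : ℝ}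
    (hc : Tendsto (fun x : H => ℓ₁ x / ℓ₂ x) cofinite (𝓝 c)) :
    Tendsto (fun g => ℓ₁ g / ℓ₂ g) cofinite (𝓝 c) :=
  tendsto_cofinite_of_forall_coset fun g =>
    ((h₁.isEquivalent_mul_left g hproper₁).div
      (h₂.isEquivalent_mul_left g hproper₂)).symm.tendsto_nhds hc

end FiniteIndex

section InfiniteCyclic

theorem isLengthFunction_natAbs :
    IsLengthFunction fun n : Multiplicative ℤ => ((toAdd n).natAbs : ℝ) :=
  ⟨fun n => Nat.cast_nonneg _, fun n => by simp, fun n => by simp,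
    fun m n => by
      simpa only [toAdd_mul, ← Nat.cast_add] using Nat.cast_le.2 (Int.natAbs_add_le _ _)⟩

theorem tendsto_natAbs_cofinite_atTop :
    Tendsto (fun n : Multiplicative ℤ => (toAdd n).natAbs) cofinite atTop := by
  rw [← Nat.cofinite_eq_atTop]
  refine Tendsto.cofinite_of_finite_preimage_singleton fun k => ?_
  exact (Set.toFinite {ofAdd (k : ℤ), ofAdd (-k : ℤ)}).subset fun n hn => Int.natAbs_eq_iff.1 hn

theorem IsLengthFunction.apply_ofAdd_natAbs {ℓ : Multiplicative ℤ → ℝ} (h : IsLengthFunction ℓ)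
    (n : Multiplicative ℤ) : ℓ (ofAdd ((toAdd n).natAbs : ℤ)) = ℓ n := by
  rcases Int.natAbs_eq (toAdd n) with hn | hn
  · rw [← hn, ofAdd_toAdd]
  · rw [← h.map_inv, ← ofAdd_neg, ← hn, ofAdd_toAdd]

theorem IsLengthFunction.exists_tendsto_div_nat {ℓ : Multiplicative ℤ → ℝ}
    (h : IsLengthFunction ℓ) :
    ∃ L : ℝ, Tendsto (fun n : ℕ => ℓ (ofAdd (n : ℤ)) / n) atTop (𝓝 L) := by
  have hsub : Subadditive fun n : ℕ => ℓ (ofAdd (n : ℤ)) := fun m n => by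
    simpa only [Nat.cast_add, ofAdd_add] using h.map_mul_le _ _
  refine ⟨hsub.lim, hsub.tendsto_lim ⟨0, ?_⟩⟩
  rintro _ ⟨n, rfl⟩
  exact div_nonneg (h.nonneg _) n.cast_nonneg

namespace IsMaximalLengthDiscrete

theorem pos_of_tendsto_div_nat {ℓ : Multiplicative ℤ → ℝ} (h : IsMaximalLengthDiscrete ℓ) {L : ℝ}
    (hL : Tendsto (fun n : ℕ => ℓ (ofAdd (n : ℤ)) / n) atTop (𝓝 L)) : 0 < L := by
  obtain ⟨K, hK, C, hKC⟩ := h.exists_pos_le_mul_add isLengthFunction_natAbs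
  have hbound : Tendsto (fun n : ℕ => K * (ℓ (ofAdd (n : ℤ)) / n) + C / n) atTop (𝓝 (K * L)) := by
    simpa only [add_zero] using (hL.const_mul K).add (tendsto_const_div_atTop_nhds_zero_nat C)
  have hone : 1 ≤ K * L := by
    refine ge_of_tendsto hbound ?_
    filter_upwards [eventually_gt_atTop 0] with n hn
    have hn' : (0 : ℝ) < n := Nat.cast_pos.2 hn
    rw [← mul_div_assoc, ← add_div, one_le_div hn']
    simpa using hKC (ofAdd (n : ℤ))
  exact pos_of_mul_pos_right (one_pos.trans_le hone) hK.le

theorem exists_pos_tendsto_div_natAbs {ℓ : Multiplicative ℤ → ℝ} (h : IsMaximalLengthDiscrete ℓ) :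
    ∃ L : ℝ, 0 < L ∧ Tendsto (fun n => ℓ n / (toAdd n).natAbs) cofinite (𝓝 L) := by
  obtain ⟨L, hL⟩ := h.1.exists_tendsto_div_nat
  refine ⟨L, h.pos_of_tendsto_div_nat hL, (hL.comp tendsto_natAbs_cofinite_atTop).congr fun n => ?_⟩
  rw [comp_apply, h.1.apply_ofAdd_natAbs]

theorem exists_pos_tendsto_div_int {ℓ₁ ℓ₂ : Multiplicative ℤ → ℝ}
    (h₁ : IsMaximalLengthDiscrete ℓ₁) (h₂ : IsMaximalLengthDiscrete ℓ₂) :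
    ∃ c : ℝ, 0 < c ∧ Tendsto (fun n => ℓ₁ n / ℓ₂ n) cofinite (𝓝 c) := by
  obtain ⟨L₁, hL₁, hlim₁⟩ := h₁.exists_pos_tendsto_div_natAbs
  obtain ⟨L₂, hL₂, hlim₂⟩ := h₂.exists_pos_tendsto_div_natAbs
  refine ⟨L₁ / L₂, div_pos hL₁ hL₂, (hlim₁.div hlim₂ hL₂.ne').congr' ?_⟩
  filter_upwards [tendsto_natAbs_cofinite_atTop.eventually_gt_atTop 0] with n hn
  exact div_div_div_cancel_right₀ (Nat.cast_ne_zero.2 hn.ne') _ _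

variable {C : Type*} [Group C] [IsCyclic C] [Infinite C] {ℓ ℓ₁ ℓ₂ : C → ℝ}

theorem tendsto_cofinite_atTop_of_isCyclic (h : IsMaximalLengthDiscrete ℓ) :
    Tendsto ℓ cofinite atTop := by
  let e : C ≃* Multiplicative ℤ := intCyclicMulEquiv.symm
  exact h.tendsto_atTop (isLengthFunction_natAbs.comp_injective e.toMonoidHom e.injective)
    (tendsto_natCast_atTop_atTop.comp
      (tendsto_natAbs_cofinite_atTop.comp e.injective.tendsto_cofinite))

theorem exists_pos_tendsto_div_of_isCyclic (h₁ : IsMaximalLengthDiscrete ℓ₁)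
    (h₂ : IsMaximalLengthDiscrete ℓ₂) :
    ∃ c : ℝ, 0 < c ∧ Tendsto (fun x => ℓ₁ x / ℓ₂ x) cofinite (𝓝 c) := by
  let e : Multiplicative ℤ ≃* C := intCyclicMulEquiv
  obtain ⟨c, hc, hlim⟩ := (h₁.comp_mulEquiv e).exists_pos_tendsto_div_int (h₂.comp_mulEquiv e)
  refine ⟨c, hc, (hlim.comp e.symm.injective.tendsto_cofinite).congr fun x => ?_⟩
  simp only [comp_apply, e.apply_symm_apply]

end IsMaximalLengthDiscrete

end InfiniteCyclic

instance isCyclic_range {N G : Type*} [Group N] [IsCyclic N] [Group G] (f : N →* G) :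
    IsCyclic f.range :=
  isCyclic_of_surjective f.rangeRestrict f.rangeRestrict_surjective

instance finiteIndex_range_inl {N Q : Type*} [Group N] [Group Q] [Finite Q] (φ : Q →* MulAut N) :
    (SemidirectProduct.inl : N →* N ⋊[φ] Q).range.FiniteIndex := by
  rw [SemidirectProduct.range_inl_eq_ker_rightHom]
  infer_instance

theorem statement7_general {G : Type*} [Group G] (H : Subgroup G) [IsCyclic H] [H.FiniteIndex]
    (ℓ₁ ℓ₂ : G → ℝ) (h₁ : IsMaximalLengthDiscrete ℓ₁) (h₂ : IsMaximalLengthDiscrete ℓ₂) :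
    ∃ lam : ℝ, 0 < lam ∧ ∀ ε : ℝ, 0 < ε → {g : G | ε ≤ |ℓ₁ g / ℓ₂ g - lam|}.Finite := by
  rcases finite_or_infinite H with hfin | _
  · have : Finite G := (Subgroup.finite_iff_finite_and_finiteIndex H).2 ⟨hfin, inferInstance⟩
    exact ⟨1, one_pos, fun ε _ => Set.toFinite _⟩
  · have hH₁ := h₁.comp_subtype H
    have hH₂ := h₂.comp_subtype H
    obtain ⟨c, hc, hlimH⟩ := hH₁.exists_pos_tendsto_div_of_isCyclic hH₂
    have hlim : Tendsto (fun g => ℓ₁ g / ℓ₂ g) cofinite (𝓝 c) :=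
      h₁.1.tendsto_div_of_finiteIndex h₂.1 hH₁.tendsto_cofinite_atTop_of_isCyclic
        hH₂.tendsto_cofinite_atTop_of_isCyclic hlimH
    refine ⟨c, hc, fun ε hε => ?_⟩
    simpa only [eventually_cofinite, Real.dist_eq, not_lt] using Metric.tendsto_nhds.1 hlim ε hε

/-- The infinite dihedral group is asymptotically spherical: for any two maximal length
functions `ℓ₁, ℓ₂` on `D∞` there is `λ > 0` such that for every `ε > 0` the set
`{g | |ℓ₁(g)/ℓ₂(g) - λ| ≥ ε}` is finite. -/
theorem statement7 (ℓ₁ ℓ₂ : DInf → ℝ)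
    (h₁ : IsMaximalLengthDiscrete ℓ₁) (h₂ : IsMaximalLengthDiscrete ℓ₂) :
    ∃ lam : ℝ, 0 < lam ∧ ∀ ε : ℝ, 0 < ε →
      {g : DInf | ε ≤ |ℓ₁ g / ℓ₂ g - lam|}.Finite :=
  statement7_general (SemidirectProduct.inl : _ →* DInf).range ℓ₁ ℓ₂ h₁ h₂
end

section
/- For each integer n ≥ 1 define ℓ_n(x, y) = n·|x| + |y| on the discrete group ℤ². Then each ℓ_n is a maximal length function on ℤ², and along the cofinite filter on ℤ² one has limsup ℓ_n/ℓ_1 = n and limsup ℓ_1/ℓ_n = 1, so that α(ℓ_n, ℓ_1) = log n. In particular, ℤ² has unbounded eccentricity: sup{ α(ℓ, ℓ') : ℓ, ℓ' maximal length functions on ℤ² } = ∞. -/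
open Filter Topology

/-- `ℓ_n(x, y) = n·|x| + |y|` on `ℤ²`. -/
noncomputable def ellN (n : ℕ) (p : ℤ × ℤ) : ℝ := (n : ℝ) * |(p.1 : ℝ)| + |(p.2 : ℝ)|

/-!
Every element of `ℤ²` is `x • (1, 0) + y • (0, 1)`, so symmetry and subadditivity bound every
length function by a multiple of `|x| + |y|`; hence every `ellN n` with `n ≠ 0` is maximal.
The ratio `ellN m / ellN n` is a mediant of its values `m / n` on the first axis and `1` on the
second. Both axes are infinite, so its limsup is `max (m / n) 1`.
-/

theorem limsup_eq_of_eventually_le_of_frequently_ge {α β : Type*}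
    [ConditionallyCompleteLinearOrder β] {f : Filter α} {u : α → β} {c : β}
    (hle : ∀ᶠ a in f, u a ≤ c) (hge : ∃ᶠ a in f, c ≤ u a) : limsup u f = c :=
  le_antisymm (limsup_le_of_le (.of_frequently_ge hge) hle)
    (le_limsup_of_frequently_le hge (isBoundedUnder_of_eventually_le hle))

namespace IsAddLengthFunction

section AddGroup

variable {G : Type*} [AddGroup G] {ℓ : G → ℝ}

theorem map_nsmul_le (hℓ : IsAddLengthFunction ℓ) (k : ℕ) (a : G) : ℓ (k • a) ≤ k * ℓ a := by
  have ⟨_, map_eq_zero, _, map_add_le⟩ := hℓ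
  induction k with
  | zero => simp [(map_eq_zero 0).2 rfl]
  | succ k ih =>
    calc ℓ ((k + 1) • a) = ℓ (k • a + a) := by rw [succ_nsmul]
      _ ≤ ℓ (k • a) + ℓ a := map_add_le _ _
      _ ≤ k * ℓ a + ℓ a := by gcongr
      _ = (k + 1 : ℕ) * ℓ a := by push_cast; ring

theorem map_zsmul_le (hℓ : IsAddLengthFunction ℓ) (k : ℤ) (a : G) :
    ℓ (k • a) ≤ |(k : ℝ)| * ℓ a := by
  obtain ⟨m, rfl | rfl⟩ := k.eq_nat_or_neg
  · simpa using hℓ.map_nsmul_le m a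
  · have ⟨_, _, map_neg, _⟩ := hℓ
    simpa [map_neg] using hℓ.map_nsmul_le m a

end AddGroup

theorem le_mul_ellN_one {ℓ : ℤ × ℤ → ℝ} (hℓ : IsAddLengthFunction ℓ) (p : ℤ × ℤ) :
    ℓ p ≤ max (ℓ (1, 0)) (ℓ (0, 1)) * ellN 1 p := by
  obtain ⟨x, y⟩ := p
  have ⟨_, _, _, map_add_le⟩ := hℓ
  calc ℓ (x, y) = ℓ (x • (1, 0) + y • (0, 1)) := by simp
    _ ≤ ℓ (x • (1, 0)) + ℓ (y • (0, 1)) := map_add_le _ _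
    _ ≤ |(x : ℝ)| * ℓ (1, 0) + |(y : ℝ)| * ℓ (0, 1) :=
      add_le_add (hℓ.map_zsmul_le x _) (hℓ.map_zsmul_le y _)
    _ ≤ |(x : ℝ)| * max (ℓ (1, 0)) (ℓ (0, 1)) + |(y : ℝ)| * max (ℓ (1, 0)) (ℓ (0, 1)) := by
      gcongr
      · exact le_max_left _ _
      · exact le_max_right _ _
    _ = max (ℓ (1, 0)) (ℓ (0, 1)) * ellN 1 (x, y) := by simp only [ellN, Nat.cast_one]; ring

end IsAddLengthFunction

theorem ellN_nonneg (n : ℕ) (p : ℤ × ℤ) : 0 ≤ ellN n p := by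
  unfold ellN
  positivity

theorem ellN_eq_zero_iff {n : ℕ} (hn : n ≠ 0) (p : ℤ × ℤ) : ellN n p = 0 ↔ p = 0 := by
  rw [ellN, add_eq_zero_iff_of_nonneg (by positivity) (abs_nonneg _)]
  simp [hn, Prod.ext_iff]

theorem ellN_neg (n : ℕ) (p : ℤ × ℤ) : ellN n (-p) = ellN n p := by
  simp [ellN]

theorem ellN_add_le (n : ℕ) (p q : ℤ × ℤ) : ellN n (p + q) ≤ ellN n p + ellN n q := by
  simp only [ellN, Prod.fst_add, Prod.snd_add, Int.cast_add]
  calc n * |(p.1 + q.1 : ℝ)| + |(p.2 + q.2 : ℝ)|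
      ≤ n * (|(p.1 : ℝ)| + |(q.1 : ℝ)|) + (|(p.2 : ℝ)| + |(q.2 : ℝ)|) := by
        gcongr <;> exact abs_add_le _ _
    _ = n * |(p.1 : ℝ)| + |(p.2 : ℝ)| + (n * |(q.1 : ℝ)| + |(q.2 : ℝ)|) := by ring

theorem isAddLengthFunction_ellN {n : ℕ} (hn : n ≠ 0) : IsAddLengthFunction (ellN n) :=
  ⟨ellN_nonneg n, ellN_eq_zero_iff hn, ellN_neg n, ellN_add_le n⟩

theorem ellN_le_mul_ellN (m : ℕ) {n : ℕ} (hn : n ≠ 0) (p : ℤ × ℤ) :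
    ellN m p ≤ max (m / n : ℝ) 1 * ellN n p := by
  have hm : (m : ℝ) ≤ max (m / n : ℝ) 1 * n :=
    (div_le_iff₀ (by positivity)).1 (le_max_left _ _)
  calc ellN m p = m * |(p.1 : ℝ)| + 1 * |(p.2 : ℝ)| := by rw [ellN, one_mul]
    _ ≤ max (m / n : ℝ) 1 * n * |(p.1 : ℝ)| + max (m / n : ℝ) 1 * |(p.2 : ℝ)| := by
      gcongr
      exact le_max_right _ _
    _ = max (m / n : ℝ) 1 * ellN n p := by rw [ellN]; ring

theorem ellN_one_le_ellN {n : ℕ} (hn : n ≠ 0) (p : ℤ × ℤ) : ellN 1 p ≤ ellN n p := by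
  simpa [Nat.cast_inv_le_one] using ellN_le_mul_ellN 1 hn p

theorem isMaximalAddLengthDiscrete_ellN {n : ℕ} (hn : n ≠ 0) :
    IsMaximalAddLengthDiscrete (ellN n) := by
  refine ⟨isAddLengthFunction_ellN hn, fun ℓ hℓ => ⟨max (ℓ (1, 0)) (ℓ (0, 1)), 0, fun p => ?_⟩⟩
  have max_nonneg : 0 ≤ max (ℓ (1, 0)) (ℓ (0, 1)) := (hℓ.1 _).trans (le_max_left _ _)
  calc ℓ p ≤ max (ℓ (1, 0)) (ℓ (0, 1)) * ellN 1 p := hℓ.le_mul_ellN_one p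
    _ ≤ max (ℓ (1, 0)) (ℓ (0, 1)) * ellN n p := by gcongr; exact ellN_one_le_ellN hn p
    _ = max (ℓ (1, 0)) (ℓ (0, 1)) * ellN n p + 0 := (add_zero _).symm

theorem frequently_ellN_div_ellN_eq_div (m n : ℕ) :
    ∃ᶠ p in cofinite, ellN m p / ellN n p = m / n := by
  refine (Prod.mk_left_injective (0 : ℤ)).tendsto_cofinite.frequently
    ((eventually_cofinite_ne (0 : ℤ)).mono fun x hx => ?_).frequently
  simp [ellN, mul_div_mul_right, hx]

theorem frequently_ellN_div_ellN_eq_one (m n : ℕ) :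
    ∃ᶠ p in cofinite, ellN m p / ellN n p = 1 := by
  refine (Prod.mk_right_injective (0 : ℤ)).tendsto_cofinite.frequently
    ((eventually_cofinite_ne (0 : ℤ)).mono fun y hy => ?_).frequently
  simp [ellN, hy]

theorem limsup_ellN_div_ellN (m : ℕ) {n : ℕ} (hn : n ≠ 0) :
    limsup (fun p => ellN m p / ellN n p) cofinite = max (m / n : ℝ) 1 := by
  apply limsup_eq_of_eventually_le_of_frequently_ge
  · exact .of_forall fun p =>
      div_le_of_le_mul₀ (ellN_nonneg n p) (by positivity) (ellN_le_mul_ellN m hn p)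
  · rcases max_choice (m / n : ℝ) 1 with h | h <;> rw [h]
    · exact (frequently_ellN_div_ellN_eq_div m n).mono fun _ => Eq.ge
    · exact (frequently_ellN_div_ellN_eq_one m n).mono fun _ => Eq.ge

theorem limsup_ellN_div_ellN_one {n : ℕ} (hn : n ≠ 0) :
    limsup (fun p => ellN n p / ellN 1 p) cofinite = n := by
  have h : (1 : ℝ) ≤ n := by exact_mod_cast Nat.one_le_iff_ne_zero.2 hn
  simpa [h] using limsup_ellN_div_ellN n one_ne_zero

theorem limsup_ellN_one_div_ellN {n : ℕ} (hn : n ≠ 0) :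
    limsup (fun p => ellN 1 p / ellN n p) cofinite = 1 := by
  simpa [Nat.cast_inv_le_one] using limsup_ellN_div_ellN 1 hn

theorem log_limsup_ellN_add_log_limsup_ellN {n : ℕ} (hn : n ≠ 0) :
    Real.log (limsup (fun p => ellN n p / ellN 1 p) cofinite) +
      Real.log (limsup (fun p => ellN 1 p / ellN n p) cofinite) = Real.log n := by
  rw [limsup_ellN_div_ellN_one hn, limsup_ellN_one_div_ellN hn, Real.log_one, add_zero]

/-- Each `ℓ_n`, `n ≥ 1`, is a maximal length function on the discrete group `ℤ²`, with
`limsup ℓ_n/ℓ_1 = n` and `limsup ℓ_1/ℓ_n = 1` along the cofinite filter, so that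
`α(ℓ_n, ℓ_1) = log n`.  In particular `ℤ²` has unbounded eccentricity: the values
`α(ℓ, ℓ')` over pairs of maximal length functions are unbounded. -/
theorem statement17 :
    (∀ n : ℕ, 1 ≤ n →
      IsMaximalAddLengthDiscrete (ellN n) ∧
      limsup (fun p : ℤ × ℤ => ellN n p / ellN 1 p) cofinite = (n : ℝ) ∧
      limsup (fun p : ℤ × ℤ => ellN 1 p / ellN n p) cofinite = 1 ∧
      Real.log (limsup (fun p : ℤ × ℤ => ellN n p / ellN 1 p) cofinite) +
        Real.log (limsup (fun p : ℤ × ℤ => ellN 1 p / ellN n p) cofinite)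
        = Real.log (n : ℝ)) ∧
    ∀ C : ℝ, ∃ ℓ ℓ' : ℤ × ℤ → ℝ,
      IsMaximalAddLengthDiscrete ℓ ∧ IsMaximalAddLengthDiscrete ℓ' ∧
      C < Real.log (limsup (fun p : ℤ × ℤ => ℓ p / ℓ' p) cofinite) +
        Real.log (limsup (fun p : ℤ × ℤ => ℓ' p / ℓ p) cofinite) := by
  refine ⟨fun n one_le_n => ?_, fun C => ?_⟩
  · have hn : n ≠ 0 := Nat.one_le_iff_ne_zero.1 one_le_n
    exact ⟨isMaximalAddLengthDiscrete_ellN hn, limsup_ellN_div_ellN_one hn,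
      limsup_ellN_one_div_ellN hn, log_limsup_ellN_add_log_limsup_ellN hn⟩
  · have log_tendsto : Tendsto (fun n : ℕ => Real.log n) atTop atTop :=
      Real.tendsto_log_atTop.comp tendsto_natCast_atTop_atTop
    obtain ⟨n, C_lt_log, hn⟩ :=
      ((log_tendsto.eventually_gt_atTop C).and (eventually_ne_atTop 0)).exists
    exact ⟨ellN n, ellN 1, isMaximalAddLengthDiscrete_ellN hn,
      isMaximalAddLengthDiscrete_ellN one_ne_zero,
      C_lt_log.trans_eq (log_limsup_ellN_add_log_limsup_ellN hn).symm⟩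
end

section
/- Let X be a real Banach space which is almost transitive: for all a, b ∈ X with ‖a‖ = ‖b‖ = 1 and every δ > 0 there is a surjective linear isometry T : X → X with ‖T(a) − b‖ < δ. Then for all x, y, z, u ∈ X with ‖y − x‖ ≤ ‖u − z‖ and every ε > 0, there exist a surjective linear isometry T : X → X and a vector c ∈ X such that the affine isometry h(v) = T(v) + c satisfies h(z) = x and ‖h(u) − y‖ < (‖u − z‖ − ‖y − x‖) + ε. -/
/-!
After translating, the task is to move `p = u - z` close to `q = y - x` by a linear isometry.
Almost transitivity passes from the unit sphere to every sphere by homogeneity, so it suffices to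
replace `p` by its radial projection onto the sphere of radius `‖q‖`, which lies at distance
`|‖p‖ - ‖q‖|` from `p`, and linear isometries preserve this distance.
-/

theorem exists_norm_eq_and_norm_sub_eq {E : Type*} [SeminormedAddCommGroup E] [NormedSpace ℝ E]
    {p : E} (hp : ‖p‖ ≠ 0) {r : ℝ} (hr : 0 ≤ r) :
    ∃ p' : E, ‖p'‖ = r ∧ ‖p - p'‖ = |‖p‖ - r| := by
  refine ⟨(r / ‖p‖) • p, ?_, ?_⟩
  · rw [norm_smul, Real.norm_of_nonneg (by positivity), div_mul_cancel₀ r hp]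
  · calc ‖p - (r / ‖p‖) • p‖
        = ‖(1 - r / ‖p‖) • p‖ := by rw [sub_smul, one_smul]
      _ = |(1 - r / ‖p‖) * ‖p‖| := by rw [norm_smul, Real.norm_eq_abs, abs_mul, abs_norm]
      _ = |‖p‖ - r| := by rw [sub_mul, one_mul, div_mul_cancel₀ r hp]

section

variable {𝕜 X : Type*} [RCLike 𝕜] [SeminormedAddCommGroup X] [NormedSpace 𝕜 X]

variable (𝕜 X) in
/-- A space is almost transitive if its group of surjective `𝕜`-linear isometries has dense orbits
in the unit sphere; this is the hypothesis under which one vector can be moved close to another.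
Density is spelled out with `δ`, so that no topology or action on the sphere is needed. -/
def AlmostTransitive : Prop :=
  ∀ a b : X, ‖a‖ = 1 → ‖b‖ = 1 → ∀ δ : ℝ, 0 < δ → ∃ T : X ≃ₗᵢ[𝕜] X, ‖T a - b‖ < δ

namespace AlmostTransitive

theorem exists_norm_map_sub_lt_of_norm_eq (hX : AlmostTransitive 𝕜 X) {a b : X}
    (hab : ‖a‖ = ‖b‖) {δ : ℝ} (hδ : 0 < δ) : ∃ T : X ≃ₗᵢ[𝕜] X, ‖T a - b‖ < δ := by
  rcases (norm_nonneg a).eq_or_lt' with ha | ha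
  · refine ⟨.refl 𝕜 X, (norm_sub_le a b).trans_lt ?_⟩
    rwa [← hab, ha, add_zero]
  · have norm_inv_smul (v : X) : ‖((‖a‖⁻¹ : ℝ) : 𝕜) • v‖ = ‖a‖⁻¹ * ‖v‖ := by
      rw [norm_smul, RCLike.norm_ofReal, abs_inv, abs_norm]
    obtain ⟨T, hT⟩ := hX (((‖a‖⁻¹ : ℝ) : 𝕜) • a) (((‖a‖⁻¹ : ℝ) : 𝕜) • b)
      (by rw [norm_inv_smul, inv_mul_cancel₀ ha.ne'])
      (by rw [norm_inv_smul, ← hab, inv_mul_cancel₀ ha.ne'])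
      (‖a‖⁻¹ * δ) (by positivity)
    rw [map_smul, ← smul_sub, norm_inv_smul] at hT
    exact ⟨T, lt_of_mul_lt_mul_left hT (by positivity)⟩

theorem exists_norm_map_sub_lt (hX : AlmostTransitive 𝕜 X) (p q : X) {ε : ℝ} (hε : 0 < ε) :
    ∃ T : X ≃ₗᵢ[𝕜] X, ‖T p - q‖ < |‖p‖ - ‖q‖| + ε := by
  by_cases hp : ‖p‖ = 0
  · refine ⟨.refl 𝕜 X, (norm_sub_le p q).trans_lt ?_⟩
    rw [hp, zero_add, zero_sub, abs_neg, abs_norm]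
    exact lt_add_of_pos_right _ hε
  · let _ : NormedSpace ℝ X := .restrictScalars ℝ 𝕜 X
    obtain ⟨p', norm_p', norm_p_sub⟩ := exists_norm_eq_and_norm_sub_eq hp (norm_nonneg q)
    obtain ⟨T, hT⟩ := hX.exists_norm_map_sub_lt_of_norm_eq norm_p' hε
    refine ⟨T, ?_⟩
    calc ‖T p - q‖
        ≤ ‖T p - T p'‖ + ‖T p' - q‖ := norm_sub_le_norm_sub_add_norm_sub ..
      _ = |‖p‖ - ‖q‖| + ‖T p' - q‖ := by rw [← map_sub, T.norm_map, norm_p_sub]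
      _ < |‖p‖ - ‖q‖| + ε := by gcongr

end AlmostTransitive

theorem statement18_general (hX : AlmostTransitive 𝕜 X) (x y z u : X) {ε : ℝ} (hε : 0 < ε) :
    ∃ (T : X ≃ₗᵢ[𝕜] X) (c : X),
      T z + c = x ∧ ‖(T u + c) - y‖ < |‖u - z‖ - ‖y - x‖| + ε := by
  obtain ⟨T, hT⟩ := hX.exists_norm_map_sub_lt (u - z) (y - x) hε
  refine ⟨T, x - T z, add_sub_cancel _ _, ?_⟩
  have translate : T u + (x - T z) - y = T (u - z) - (y - x) := by
    rw [map_sub]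
    abel
  rwa [translate]

end

/-- Let `X` be an almost transitive real Banach space: for all unit vectors `a, b` and
every `δ > 0` there is a surjective linear isometry `T` of `X` with `‖T a - b‖ < δ`.
Then for all `x, y, z, u ∈ X` with `‖y - x‖ ≤ ‖u - z‖` and every `ε > 0` there are a
surjective linear isometry `T` of `X` and a vector `c ∈ X` such that the affine isometry
`h(v) = T v + c` satisfies `h(z) = x` and `‖h(u) - y‖ < (‖u - z‖ - ‖y - x‖) + ε`. -/
theorem statement18 {X : Type*} [NormedAddCommGroup X] [NormedSpace ℝ X] [CompleteSpace X]
    (htrans : ∀ a b : X, ‖a‖ = 1 → ‖b‖ = 1 → ∀ δ : ℝ, 0 < δ →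
      ∃ T : X ≃ₗᵢ[ℝ] X, ‖T a - b‖ < δ) :
    ∀ x y z u : X, ‖y - x‖ ≤ ‖u - z‖ → ∀ ε : ℝ, 0 < ε →
      ∃ (T : X ≃ₗᵢ[ℝ] X) (c : X),
        T z + c = x ∧ ‖(T u + c) - y‖ < (‖u - z‖ - ‖y - x‖) + ε := by
  intro x y z u hle ε hε
  simpa only [abs_of_nonneg (sub_nonneg.mpr hle)] using statement18_general htrans x y z u hε
end
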